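/- arXiv:2108.03772 — 4 statements merged into one kernel-verified Lean document; each statement's English description precedes it below -/
import Mathlib

section
/- Let n be a natural number and let f : ℝ → ℝ be compactly supported and n times continuously differentiable. Suppose moreover that there exist finitely many points b_0 < b_1 < ... < b_M such that on the closure of each complementary interval f restricts to a C^{n+2} function (so f^{(n+1)} and f^{(n+2)} exist and are bounded off the finite set {b_0,...,b_M}, with one-sided limits at these points). Then there exists a constant C_0 ≥ 0 such that for all ω ≠ 0, the Fourier transform of f satisfies |𝓕f(ω)| ≤ C_0 · |ω|^{-(n+2)}. -/
/-!
Since `f` is `C^n` with compact support, `𝓕(f^{(n)})(ω) = (iω)^n 𝓕f(ω)`, so it suffices to bound the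
transform of `g = f^{(n)}` by a multiple of `|ω|⁻²`. The function `g` is continuous on `ℝ`, compactly
supported, and `C²` on each closed piece (`contDiffOn_iteratedDeriv`).

On a single piece `[a, b]`, two integrations by parts give
`∫_a^b g(x) e^{-iωx} dx = E(b) - E(a) + O(ω⁻²)` with `E(x) = g(x) e^{-iωx} / (-iω)`
(`hasEndpointExpansion_of_contDiffOn`). As `g` is continuous across the breakpoints, the terms `E`
telescope when the pieces are concatenated (`HasEndpointExpansion.trans`), and they vanish at the two
outermost points, which are chosen outside the support of `g`. Only the `O(ω⁻²)` part remains.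
-/

open MeasureTheory Real Set

/-- The oscillating factor `e^{-iωx}`. -/
noncomputable def osc (ω x : ℝ) : ℂ := Complex.exp (-(Complex.I * ω * x))

lemma norm_osc (ω x : ℝ) : ‖osc ω x‖ = 1 := by
  have : -(Complex.I * ω * x) = ((-(ω * x) : ℝ) : ℂ) * Complex.I := by push_cast; ring
  rw [osc, this, Complex.norm_exp_ofReal_mul_I]

lemma continuous_osc (ω : ℝ) : Continuous (osc ω) := by
  unfold osc
  fun_prop

lemma hasDerivAt_osc_div {ω : ℝ} (hω : ω ≠ 0) (x : ℝ) :
    HasDerivAt (fun y : ℝ => osc ω y / (-(Complex.I * ω))) (osc ω x) x := by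
  have hc : -(Complex.I * (ω : ℂ)) ≠ 0 := by simp [hω]
  have h1 : HasDerivAt (fun y : ℝ => -(Complex.I * ω * (y : ℂ))) (-(Complex.I * ω)) x := by
    have := ((hasDerivAt_id x).ofReal_comp.const_mul (Complex.I * ω)).neg
    simpa [Pi.neg_def] using this
  have h2 := h1.cexp.div_const (-(Complex.I * ω))
  rw [mul_div_cancel_right₀ _ hc] at h2
  exact h2

/-- One integration by parts against `e^{-iωx}` on an interval where the amplitude is `C¹` up to
the endpoints. -/
lemma integral_mul_osc {g : ℝ → ℂ} {a b : ℝ} (hab : a < b) (hg : ContDiffOn ℝ 1 g (Icc a b))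
    {ω : ℝ} (hω : ω ≠ 0) :
    ∫ x in a..b, g x * osc ω x =
      g b * (osc ω b / (-(Complex.I * ω))) - g a * (osc ω a / (-(Complex.I * ω)))
        - (∫ x in a..b, derivWithin g (Icc a b) x * osc ω x) / (-(Complex.I * ω)) := by
  have hu := uniqueDiffOn_Icc hab
  rw [← intervalIntegral.integral_div]
  simp_rw [mul_div_assoc]
  apply intervalIntegral.integral_mul_deriv_eq_deriv_mul_of_hasDerivWithinAt
  · intro x hx
    rw [uIcc_of_le hab.le] at hx ⊢
    exact ((hg.differentiableOn one_ne_zero) x hx).hasDerivWithinAt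
  · exact fun x _ => (hasDerivAt_osc_div hω x).hasDerivWithinAt
  · apply ContinuousOn.intervalIntegrable
    rw [uIcc_of_le hab.le]
    exact hg.continuousOn_derivWithin hu le_rfl
  · exact (continuous_osc ω).intervalIntegrable _ _

lemma norm_neg_I_mul (ω : ℝ) : ‖-(Complex.I * (ω : ℂ))‖ = |ω| := by simp

lemma exists_norm_integral_mul_osc_le {g : ℝ → ℂ} {a b : ℝ} (hab : a < b)
    (hg : ContDiffOn ℝ 1 g (Icc a b)) :
    ∃ C : ℝ, 0 ≤ C ∧ ∀ ω : ℝ, ω ≠ 0 → ‖∫ x in a..b, g x * osc ω x‖ ≤ C / |ω| := by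
  refine ⟨‖g b‖ + ‖g a‖ + ∫ x in a..b, ‖derivWithin g (Icc a b) x‖, ?_, fun ω hω => ?_⟩
  · have := intervalIntegral.integral_nonneg (μ := volume) hab.le
      (fun x _ => norm_nonneg (derivWithin g (Icc a b) x))
    positivity
  rw [integral_mul_osc hab hg hω]
  have h1 : ‖∫ x in a..b, derivWithin g (Icc a b) x * osc ω x‖
      ≤ ∫ x in a..b, ‖derivWithin g (Icc a b) x‖ := by
    refine (intervalIntegral.norm_integral_le_integral_norm hab.le).trans (le_of_eq ?_)
    simp [norm_osc]
  have h2 : ∀ x, ‖g x * (osc ω x / (-(Complex.I * ω)))‖ = ‖g x‖ / |ω| := by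
    intro x
    rw [norm_mul, norm_div, norm_osc, norm_neg_I_mul, mul_one_div]
  refine (norm_sub_le _ _).trans ?_
  rw [add_div, add_div]
  refine add_le_add ((norm_sub_le _ _).trans (by rw [h2, h2])) ?_
  rw [norm_div, norm_neg_I_mul]
  gcongr

/-- On `[a, b]` the oscillatory integral of `g` equals its first-order endpoint contribution, up to
an error `O(ω⁻²)` uniform in `ω ≠ 0`. -/
def HasEndpointExpansion (g : ℝ → ℂ) (a b : ℝ) : Prop :=
  ∃ C : ℝ, 0 ≤ C ∧ ∀ ω : ℝ, ω ≠ 0 →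
    ‖(∫ x in a..b, g x * osc ω x) -
      (g b * (osc ω b / (-(Complex.I * ω))) - g a * (osc ω a / (-(Complex.I * ω))))‖ ≤ C / |ω| ^ 2

lemma hasEndpointExpansion_of_contDiffOn {g : ℝ → ℂ} {a b : ℝ} (hab : a < b)
    (hg : ContDiffOn ℝ 2 g (Icc a b)) : HasEndpointExpansion g a b := by
  obtain ⟨C, hC, h⟩ := exists_norm_integral_mul_osc_le hab
    (hg.derivWithin (m := 1) (uniqueDiffOn_Icc hab) (by norm_num [one_add_one_eq_two]))
  refine ⟨C, hC, fun ω hω => ?_⟩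
  rw [integral_mul_osc hab (hg.of_le one_le_two) hω, sub_sub_cancel_left, norm_neg, norm_div,
    norm_neg_I_mul, pow_two, ← div_div]
  gcongr
  exact h ω hω

lemma HasEndpointExpansion.trans {g : ℝ → ℂ} (hg : Continuous g) {a b c : ℝ}
    (h1 : HasEndpointExpansion g a b) (h2 : HasEndpointExpansion g b c) :
    HasEndpointExpansion g a c := by
  obtain ⟨C, hC, h1⟩ := h1
  obtain ⟨D, hD, h2⟩ := h2
  refine ⟨C + D, by positivity, fun ω hω => ?_⟩
  have hi : ∀ p q, IntervalIntegrable (fun x => g x * osc ω x) volume p q :=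
    fun p q => (hg.mul (continuous_osc ω)).intervalIntegrable p q
  rw [← intervalIntegral.integral_add_adjacent_intervals (hi a b) (hi b c), add_div]
  refine le_trans (le_of_eq ?_) ((norm_add_le _ _).trans (add_le_add (h1 ω hω) (h2 ω hω)))
  congr 1
  ring

lemma contDiffOn_iteratedDerivWithin {F : ℝ → ℂ} {s : Set ℝ} (hs : UniqueDiffOn ℝ s) (k : ℕ) :
    ∀ m : ℕ, ContDiffOn ℝ ((m + k : ℕ) : WithTop ℕ∞) F s →
      ContDiffOn ℝ m (iteratedDerivWithin k F s) s := by
  induction k with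
  | zero => intro m h; simpa using h
  | succ k ih =>
    intro m h
    have h' := ih (m + 1) (by convert h using 2; omega)
    refine (h'.derivWithin (m := m) hs (by push_cast; exact le_rfl)).congr fun x _ => ?_
    rw [iteratedDerivWithin_succ]

/-- As `F` is `C^n` on the whole line, the two-sided `n`-th derivative agrees with the one-sided one
also at the endpoints of the piece, so it inherits the regularity of `F` there. -/
lemma contDiffOn_iteratedDeriv {F : ℝ → ℂ} {n : ℕ} {a b : ℝ} (hab : a < b)
    (hF : ContDiff ℝ n F) (h : ContDiffOn ℝ ((n : ℕ∞) + 2) F (Icc a b)) :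
    ContDiffOn ℝ 2 (iteratedDeriv n F) (Icc a b) := by
  have hu := uniqueDiffOn_Icc hab
  have := contDiffOn_iteratedDerivWithin hu n 2 (F := F)
    (by convert h using 1; push_cast; rw [add_comm])
  exact this.congr fun x hx => (iteratedDerivWithin_eq_iteratedDeriv hu hF.contDiffAt hx).symm

lemma hasCompactSupport_iteratedDeriv {F : ℝ → ℂ} (h : HasCompactSupport F) (k : ℕ) :
    HasCompactSupport (iteratedDeriv k F) := by
  induction k with
  | zero => simpa using h
  | succ k ih => rw [iteratedDeriv_succ]; exact ih.deriv

lemma fourier_eq_integral_osc (F : ℝ → ℂ) (ω : ℝ) :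
    FourierTransform.fourier F (ω / (2 * π)) = ∫ x : ℝ, F x * osc ω x := by
  rw [Real.fourier_real_eq_integral_exp_smul]
  congr 1 with x
  rw [smul_eq_mul, mul_comm, osc]
  congr 2
  have : (π : ℂ) ≠ 0 := by exact_mod_cast Real.pi_ne_zero
  push_cast
  field_simp

lemma integral_iteratedDeriv_mul_osc {F : ℝ → ℂ} {n : ℕ} (hF : ContDiff ℝ n F)
    (hs : HasCompactSupport F) (ω : ℝ) :
    ∫ x : ℝ, iteratedDeriv n F x * osc ω x = (Complex.I * ω) ^ n * ∫ x : ℝ, F x * osc ω x := by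
  have key := Real.fourier_iteratedDeriv (N := n) (n := n) (by exact_mod_cast hF)
    (fun k hk => (hF.continuous_iteratedDeriv k
      (by exact_mod_cast hk)).integrable_of_hasCompactSupport
        (hasCompactSupport_iteratedDeriv hs k)) le_rfl
  have := congrFun key (ω / (2 * π))
  rw [fourier_eq_integral_osc, fourier_eq_integral_osc, smul_eq_mul] at this
  rw [this]
  congr 2
  have : (π : ℂ) ≠ 0 := by exact_mod_cast Real.pi_ne_zero
  push_cast
  field_simp

/-- If `f : ℝ → ℝ` is compactly supported, `n` times continuously
differentiable on `ℝ`, and piecewise `C^{n+2}`, i.e. there are finitely many points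
`b 0 < b 1 < ⋯ < b M` such that on the closure of each complementary interval `f`
restricts to a `C^{n+2}` function, then the Fourier transform
`𝓕 f (ω) = ∫ f x * exp (-i ω x) dx` satisfies `|𝓕 f (ω)| ≤ C₀ * |ω| ^ (-(n+2))`
for all `ω ≠ 0`. -/
theorem fourier_decay_of_piecewise_smooth
    (n : ℕ) (f : ℝ → ℝ)
    (hf : ContDiff ℝ (n : ℕ∞) f)
    (hsupp : HasCompactSupport f)
    (hpw : ∃ (M : ℕ) (b : Fin (M + 1) → ℝ), StrictMono b ∧
      ContDiffOn ℝ ((n : ℕ∞) + 2) f (Set.Iic (b 0)) ∧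
      (∀ i : Fin M, ContDiffOn ℝ ((n : ℕ∞) + 2) f (Set.Icc (b i.castSucc) (b i.succ))) ∧
      ContDiffOn ℝ ((n : ℕ∞) + 2) f (Set.Ici (b (Fin.last M)))) :
    ∃ C₀ : ℝ, 0 ≤ C₀ ∧ ∀ ω : ℝ, ω ≠ 0 →
      ‖∫ x : ℝ, (f x : ℂ) * Complex.exp (-(Complex.I * ω * x))‖
        ≤ C₀ * |ω| ^ (-((n : ℝ) + 2)) := by
  obtain ⟨M, b, hb, hl, hm, hr⟩ := hpw
  set F : ℝ → ℂ := fun x => (f x : ℂ) with hFdef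
  have hF : ContDiff ℝ n F := Complex.ofRealCLM.contDiff.comp (by exact_mod_cast hf)
  have hFon : ∀ s, ContDiffOn ℝ ((n : ℕ∞) + 2) f s → ContDiffOn ℝ ((n : ℕ∞) + 2) F s :=
    fun s h => Complex.ofRealCLM.contDiff.comp_contDiffOn h
  have hFs : HasCompactSupport F := hsupp.comp_left (g := fun y : ℝ => (y : ℂ)) (by simp)
  set g := iteratedDeriv n F with hg
  have hgc : Continuous g := hF.continuous_iteratedDeriv n le_rfl
  have hgs : HasCompactSupport g := hasCompactSupport_iteratedDeriv hFs n
  have piece : ∀ p q, p < q → ContDiffOn ℝ ((n : ℕ∞) + 2) f (Icc p q) →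
      HasEndpointExpansion g p q := fun p q hpq h =>
    hasEndpointExpansion_of_contDiffOn hpq (contDiffOn_iteratedDeriv hpq hF (hFon _ h))
  obtain ⟨R, hR⟩ := hgs.isCompact.isBounded.subset_closedBall 0
  have hzero : ∀ x, R < |x| → g x = 0 := by
    intro x hx
    by_contra h
    have := hR (subset_tsupport g h)
    rw [mem_closedBall_zero_iff, Real.norm_eq_abs] at this
    exact absurd this (not_le.mpr hx)
  -- Outer points: beyond all breakpoints and outside the support of `g`.
  obtain ⟨A, hA0, hAR⟩ : ∃ A, A < b 0 ∧ A < -|R| :=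
    ⟨min (b 0) (-|R|) - 1, by linarith [min_le_left (b 0) (-|R|)],
      by linarith [min_le_right (b 0) (-|R|)]⟩
  obtain ⟨B, hB0, hBR⟩ : ∃ B, b (Fin.last M) < B ∧ |R| < B :=
    ⟨max (b (Fin.last M)) |R| + 1, by linarith [le_max_left (b (Fin.last M)) |R|],
      by linarith [le_max_right (b (Fin.last M)) |R|]⟩
  have hleft : ∀ x, x ≤ A → g x = 0 := fun x hx =>
    hzero x (by linarith [neg_le_abs x, le_abs_self R])
  have hright : ∀ x, B ≤ x → g x = 0 := fun x hx =>
    hzero x (by linarith [le_abs_self x, le_abs_self R])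
  have hchain : ∀ i, HasEndpointExpansion g A (b i) := by
    intro i
    induction i using Fin.induction with
    | zero => exact piece _ _ hA0 (hl.mono Icc_subset_Iic_self)
    | succ i ih => exact ih.trans hgc (piece _ _ (hb i.castSucc_lt_succ) (hm i))
  obtain ⟨C, hC, hbound⟩ :=
    (hchain (Fin.last M)).trans hgc (piece _ _ hB0 (hr.mono Icc_subset_Ici_self))
  refine ⟨C, hC, fun ω hω => ?_⟩
  have hωpos : 0 < |ω| := abs_pos.mpr hω
  have h1 := hbound ω hω
  rw [hleft A le_rfl, hright B le_rfl, zero_mul, zero_mul, sub_zero, sub_zero,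
    intervalIntegral.integral_eq_integral_of_support_subset, hg,
    integral_iteratedDeriv_mul_osc hF hFs, norm_mul, norm_pow, norm_mul, Complex.norm_I, one_mul,
    Complex.norm_real, Real.norm_eq_abs] at h1
  · change ‖∫ x : ℝ, F x * osc ω x‖ ≤ _
    have hpow : |ω| ^ (-((n : ℝ) + 2)) = (|ω| ^ (n + 2))⁻¹ := by
      rw [Real.rpow_neg hωpos.le]
      congr 1
      exact_mod_cast Real.rpow_natCast |ω| (n + 2)
    rw [hpow, ← div_eq_mul_inv, le_div_iff₀ (by positivity)]
    rw [le_div_iff₀ (by positivity)] at h1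
    calc _ = _ := by ring
      _ ≤ C := h1
  · intro x hx
    have hx' : g x ≠ 0 := left_ne_zero_of_mul hx
    refine ⟨not_le.mp fun h => hx' (hleft x h), le_of_not_ge fun h => hx' (hright x h)⟩
end

section
/- Let a, b be real numbers with a > -1, b > -1 and a - b > -1. Then (1/(2π)) ∫_{-π}^{π} (2 cos(ω/2))^a · e^{iω(a/2 - b)} dω = Γ(a+1) / (Γ(b+1) · Γ(a-b+1)). Equivalently, writing (1+e^{iω})^a for the principal branch (2cos(ω/2))^a e^{iaω/2} on ω ∈ (-π, π), one has (1/(2π)) ∫_{-π}^{π} (1+e^{iω})^a e^{-iωb} dω = binom(a, b). -/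
/-! The integral `∫ (2 cos(ω/2))^a e^{iω(a/2-b)} dω` and the generalized binomial coefficient
`binom a b` satisfy the same two-step recurrence relating `(a + 2, b + 1)` to `(a, b)`
(`cosInt_rec`, `rbinom_rec`): for the integral it comes from integrating by parts twice, for the
binomial coefficient from `Γ(x + 1) = x Γ(x)`. Their ratio is therefore constant along
`(a + 2n, b + n)`, and the value of that constant is read off from the behaviour as `n → ∞`.

The step leaves the frequency `a/2 - b` fixed, while the weight `(2 cos(ω/2))^(2n)` concentrates at
`ω = 0`; hence the integral at `(a + 2n, b + n)` divided by the one at `(2n, n)` tends to `2^a`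
(`cosInt_ratio_tendsto`). By Euler's limit formula the corresponding ratio of binomial coefficients
has the same limit (`rbinom_ratio_tendsto`). Along `(2n, n)` the identity holds exactly, by the
recurrence started at `a = b = 0`, so the constant is `2π` for every `(a, b)`. The version with the
principal branch of `(1 + e^{iω})^a` has the same integrand on `(-π, π)` (`one_add_exp_cpow`). -/

open MeasureTheory Real Set

/-- The generalized binomial coefficient `binom a b = Γ(a+1) / (Γ(b+1) Γ(a-b+1))`. -/
noncomputable def rbinom (a b : ℝ) : ℝ :=
  Real.Gamma (a + 1) / (Real.Gamma (b + 1) * Real.Gamma (a - b + 1))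

open Filter Topology

/-! ### The integral and its recurrence -/

/-- The integral `∫_{-π}^{π} (2 cos(ω/2))^a e^{iωc} dω`. The frequency `c = a/2 - b` is unchanged
by the shift `(a, b) ↦ (a + 2, b + 1)`. -/
noncomputable def cosInt (a c : ℝ) : ℂ :=
  ∫ ω in (-π)..π, (((2 * Real.cos (ω / 2)) ^ a : ℝ) : ℂ) * Complex.exp (Complex.I * ω * c)

lemma two_cos_pos {ω : ℝ} (h : ω ∈ Ioo (-π) π) : 0 < 2 * Real.cos (ω / 2) := by
  have := Real.cos_pos_of_mem_Ioo (x := ω / 2) ⟨by linarith [h.1], by linarith [h.2]⟩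
  linarith

/-- Near `±π` the function `2 cos (ω/2)` vanishes to first order, so its `a`-th power is
integrable for `a > -1`. -/
lemma intervalIntegrable_two_cos_rpow {a : ℝ} (ha : -1 < a) :
    IntervalIntegrable (fun ω : ℝ => (2 * Real.cos (ω / 2)) ^ a) volume (-π) π := by
  rcases le_or_gt 0 a with h0 | h0
  · apply Continuous.intervalIntegrable
    exact Continuous.rpow_const (by fun_prop) (fun _ => Or.inr h0)
  have key : IntervalIntegrable (fun ω : ℝ => (2 * Real.cos (ω / 2)) ^ a) volume 0 π := by
    have h1 : IntervalIntegrable (fun ω : ℝ => (2 / π) ^ a * (π - ω) ^ a) volume 0 π := by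
      have := (intervalIntegral.intervalIntegrable_rpow' (a := π) (b := 0) ha).comp_sub_left π
      simp only [sub_self, sub_zero] at this
      exact this.const_mul _
    refine h1.mono_fun' ?_ ?_
    · exact (Measurable.pow_const (by fun_prop) a).aestronglyMeasurable
    · rw [uIoc_of_le pi_pos.le]
      have hne : ∀ᵐ x ∂(volume.restrict (Ioc 0 π)), x ≠ π :=
        ae_restrict_of_ae (Measure.ae_ne volume π)
      filter_upwards [ae_restrict_mem measurableSet_Ioc, hne] with ω hω hω'
      have hlt : ω < π := lt_of_le_of_ne hω.2 hω'
      have hpos := two_cos_pos (ω := ω) ⟨by linarith [hω.1, pi_pos], hlt⟩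
      rw [Real.norm_of_nonneg (Real.rpow_nonneg hpos.le _),
        ← Real.mul_rpow (by positivity) (by linarith)]
      apply Real.rpow_le_rpow_of_nonpos (by have := sub_pos.2 hlt; positivity) _ h0.le
      -- Jordan's inequality for `sin (π/2 - ω/2) = cos (ω/2)`
      have := Real.mul_le_sin (x := π / 2 - ω / 2) (by linarith) (by linarith [hω.1])
      rw [Real.sin_pi_div_two_sub] at this
      calc 2 / π * (π - ω) = 2 * (2 / π * (π / 2 - ω / 2)) := by ring
        _ ≤ _ := by linarith
  have key2 : IntervalIntegrable (fun ω : ℝ => (2 * Real.cos (ω / 2)) ^ a) volume (-π) 0 := by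
    have := key.comp_sub_left 0
    simpa [neg_div] using this.symm
  exact key2.trans key

lemma intervalIntegrable_cosInt {a : ℝ} (ha : -1 < a) (c : ℝ) :
    IntervalIntegrable (fun ω : ℝ => (((2 * Real.cos (ω / 2)) ^ a : ℝ) : ℂ) *
      Complex.exp (Complex.I * ω * c)) volume (-π) π := by
  have h : IntervalIntegrable (fun ω : ℝ => (((2 * Real.cos (ω / 2)) ^ a : ℝ) : ℂ)) volume (-π) π :=
    ⟨(intervalIntegrable_two_cos_rpow ha).1.ofReal, (intervalIntegrable_two_cos_rpow ha).2.ofReal⟩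
  exact h.mul_continuousOn (by fun_prop)

/-- Two integrations by parts, packaged as one application of the fundamental theorem of calculus
to `(i c C^p + (p/2) C^(p-1) S) e^{iωc}` with `C = 2 cos (ω/2)`, `S = 2 sin (ω/2)`, `p = a + 2`.
This function vanishes at `±π` because `p > 1`. -/
lemma cosInt_rec {a : ℝ} (ha : -1 < a) (c : ℝ) :
    (((a + 2) ^ 2 / 4 - c ^ 2 : ℝ) : ℂ) * cosInt (a + 2) c =
      (((a + 2) * (a + 1) : ℝ) : ℂ) * cosInt a c := by
  let H : ℝ → ℂ := fun ω =>
    (Complex.I * c * (((2 * Real.cos (ω / 2)) ^ (a + 2) : ℝ) : ℂ) +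
      ((a + 2) / 2 : ℝ) * (((2 * Real.cos (ω / 2)) ^ (a + 1) * (2 * Real.sin (ω / 2)) : ℝ) : ℂ)) *
      Complex.exp (Complex.I * ω * c)
  let f : ℝ → ℂ := fun ω =>
    (((a + 2) ^ 2 / 4 - c ^ 2 : ℝ) : ℂ) * ((((2 * Real.cos (ω / 2)) ^ (a + 2) : ℝ) : ℂ) *
      Complex.exp (Complex.I * ω * c)) -
    (((a + 2) * (a + 1) : ℝ) : ℂ) * ((((2 * Real.cos (ω / 2)) ^ a : ℝ) : ℂ) *
      Complex.exp (Complex.I * ω * c))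
  have hi2 := (intervalIntegrable_cosInt (a := a + 2) (by linarith) c).const_mul
    (((a + 2) ^ 2 / 4 - c ^ 2 : ℝ) : ℂ)
  have hi0 := (intervalIntegrable_cosInt ha c).const_mul (((a + 2) * (a + 1) : ℝ) : ℂ)
  have hcont : Continuous H := by
    have h1 : Continuous fun ω : ℝ => (2 * Real.cos (ω / 2)) ^ (a + 2) :=
      Continuous.rpow_const (by fun_prop) (fun _ => Or.inr (by linarith))
    have h2 : Continuous fun ω : ℝ => (2 * Real.cos (ω / 2)) ^ (a + 1) :=
      Continuous.rpow_const (by fun_prop) (fun _ => Or.inr (by linarith))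
    have h3 : Continuous fun ω : ℝ =>
        (2 * Real.cos (ω / 2)) ^ (a + 1) * (2 * Real.sin (ω / 2)) := h2.mul (by fun_prop)
    have h1' := Complex.continuous_ofReal.comp h1
    have h3' := Complex.continuous_ofReal.comp h3
    exact ((continuous_const.mul h1').add (continuous_const.mul h3')).mul (by fun_prop)
  have hderiv : ∀ ω ∈ Ioo (-π) π, HasDerivAt H (f ω) ω := by
    intro ω hω
    have hpos := two_cos_pos hω
    have hhalf : HasDerivAt (fun x : ℝ => x / 2) (1 / 2) ω := (hasDerivAt_id ω).div_const 2
    have hC : HasDerivAt (fun x : ℝ => 2 * Real.cos (x / 2)) (-Real.sin (ω / 2)) ω := by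
      exact (hhalf.cos.const_mul 2).congr_deriv (by ring)
    have hS : HasDerivAt (fun x : ℝ => 2 * Real.sin (x / 2)) (Real.cos (ω / 2)) ω := by
      exact (hhalf.sin.const_mul 2).congr_deriv (by ring)
    have h1 := (hC.rpow_const (p := a + 2) (Or.inl hpos.ne')).ofReal_comp
    have h2 := ((hC.rpow_const (p := a + 1) (Or.inl hpos.ne')).mul hS).ofReal_comp
    have hE : HasDerivAt (fun x : ℝ => Complex.exp (Complex.I * x * c))
        (Complex.exp (Complex.I * ω * c) * (Complex.I * 1 * c)) ω :=
      (((Complex.ofRealCLM.hasDerivAt (x := ω)).const_mul Complex.I).mul_const (c : ℂ)).cexp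
    have := ((h1.const_mul (Complex.I * c)).add (h2.const_mul (((a + 2) / 2 : ℝ) : ℂ))).mul hE
    refine this.congr_deriv ?_
    have e2 : (2 * Real.cos (ω / 2)) ^ (a + 2) =
        (2 * Real.cos (ω / 2)) ^ a * (2 * Real.cos (ω / 2)) ^ 2 := by
      rw [Real.rpow_add hpos]; norm_num
    have e1 : (2 * Real.cos (ω / 2)) ^ (a + 1) =
        (2 * Real.cos (ω / 2)) ^ a * (2 * Real.cos (ω / 2)) := by
      rw [Real.rpow_add hpos, Real.rpow_one]
    have e3 : a + 2 - 1 = a + 1 := by ring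
    have e4 : a + 1 - 1 = a := by ring
    have hsc : (Complex.sin (ω / 2)) ^ 2 = 1 - (Complex.cos (ω / 2)) ^ 2 := by
      rw [← Complex.sin_sq_add_cos_sq (ω / 2 : ℂ)]; ring
    simp only [f, Pi.add_apply, Pi.mul_apply, e3, e4, e2, e1]
    push_cast
    generalize (((2 * Real.cos (ω / 2)) ^ a : ℝ) : ℂ) = X
    generalize Complex.exp (Complex.I * ω * c) = E
    generalize Complex.cos (ω / 2) = C at *
    generalize Complex.sin (ω / 2) = S at *
    linear_combination (-(a + 2) * (a + 1) * X * E) * hsc +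
      (4 * c ^ 2 * X * C ^ 2 * E) * Complex.I_sq
  have hFTC := intervalIntegral.integral_eq_sub_of_hasDerivAt_of_le
    (by linarith [pi_pos]) hcont.continuousOn hderiv (hi2.sub hi0)
  have hb1 : H π = 0 := by
    simp [H, Real.zero_rpow (show a + 2 ≠ 0 by linarith), Real.zero_rpow (show a + 1 ≠ 0 by linarith)]
  have hb2 : H (-π) = 0 := by
    simp [H, neg_div, Real.zero_rpow (show a + 2 ≠ 0 by linarith),
      Real.zero_rpow (show a + 1 ≠ 0 by linarith)]
  rw [hb1, hb2, sub_zero] at hFTC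
  simp only [f] at hFTC
  rw [intervalIntegral.integral_sub hi2 hi0, intervalIntegral.integral_const_mul,
    intervalIntegral.integral_const_mul] at hFTC
  exact sub_eq_zero.1 hFTC

/-! ### Concentration at the origin -/

/-- The weights `(2 cos (ω/2))^(2n)`, normalised to have mass one, concentrate at `ω = 0`, where
`(2 cos (ω/2))^a e^{iωc}` takes the value `2^a`. -/
lemma cosInt_ratio_tendsto {a : ℝ} (ha : -1 < a) (c : ℝ) :
    Tendsto (fun n : ℕ => cosInt (a + 2 * n) c / cosInt (2 * n) 0) atTop
      (𝓝 (((2 : ℝ) ^ a : ℝ) : ℂ)) := by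
  have hpi := pi_pos
  have hle : -π ≤ π := by linarith
  have h := tendsto_setIntegral_pow_smul_of_unique_maximum_of_isCompact_of_integrableOn
    (μ := volume) (s := Icc (-π) π) (x₀ := (0 : ℝ)) (c := fun ω : ℝ => (2 * Real.cos (ω / 2)) ^ 2)
    (g := fun ω : ℝ => (((2 * Real.cos (ω / 2)) ^ a : ℝ) : ℂ) * Complex.exp (Complex.I * ω * c))
    isCompact_Icc (by fun_prop) ?_ (fun _ _ => by positivity) (by simp) ?_ ?_ ?_
  · simp only [zero_div, Real.cos_zero, mul_one, Complex.ofReal_zero, mul_zero, zero_mul,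
      Complex.exp_zero] at h
    refine h.congr fun n => ?_
    rw [integral_Icc_eq_integral_Ioc, integral_Icc_eq_integral_Ioc,
      ← intervalIntegral.integral_of_le hle, ← intervalIntegral.integral_of_le hle]
    have e1 : cosInt (a + 2 * n) c = ∫ ω in (-π)..π, ((2 * Real.cos (ω / 2)) ^ 2) ^ n •
        ((((2 * Real.cos (ω / 2)) ^ a : ℝ) : ℂ) * Complex.exp (Complex.I * ω * c)) := by
      refine intervalIntegral.integral_congr_Ioo_of_le hle fun ω hω => ?_
      have hp := two_cos_pos hω
      have : (2 * Real.cos (ω / 2)) ^ (a + 2 * n) =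
          ((2 * Real.cos (ω / 2)) ^ 2) ^ n * (2 * Real.cos (ω / 2)) ^ a := by
        rw [Real.rpow_add hp, ← pow_mul, ← Real.rpow_natCast]; push_cast; ring
      simp only [this, Complex.real_smul]
      push_cast; ring
    have e2 : cosInt (2 * n) 0 =
        ((∫ ω in (-π)..π, ((2 * Real.cos (ω / 2)) ^ 2) ^ n : ℝ) : ℂ) := by
      rw [← intervalIntegral.integral_ofReal]
      refine intervalIntegral.integral_congr fun ω _ => ?_
      have : (2 * Real.cos (ω / 2)) ^ (2 * n : ℝ) = ((2 * Real.cos (ω / 2)) ^ 2) ^ n := by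
        rw [← pow_mul, ← Real.rpow_natCast]; push_cast; ring
      simp only [this]
      simp
    rw [e1, e2, Complex.real_smul, Complex.ofReal_inv, div_eq_inv_mul]
  · intro y hy hy0
    have h1 : Real.cos (y / 2) < 1 := by
      refine lt_of_le_of_ne (Real.cos_le_one _) fun h => hy0 ?_
      have := (Real.cos_eq_one_iff_of_lt_of_lt (x := y / 2) (by linarith [hy.1])
        (by linarith [hy.2])).1 h
      linarith
    have h0 : 0 ≤ Real.cos (y / 2) :=
      Real.cos_nonneg_of_mem_Icc ⟨by linarith [hy.1], by linarith [hy.2]⟩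
    simp only [zero_div, Real.cos_zero]
    nlinarith
  · rw [interior_Icc]
    exact subset_closure ⟨by linarith, hpi⟩
  · rw [integrableOn_Icc_iff_integrableOn_Ioc]
    exact (intervalIntegrable_iff_integrableOn_Ioc_of_le hle).1 (intervalIntegrable_cosInt ha c)
  · apply ContinuousAt.continuousWithinAt
    have h1 : ContinuousAt (fun ω : ℝ => (2 * Real.cos (ω / 2)) ^ a) 0 :=
      ContinuousAt.rpow_const (by fun_prop) (Or.inl (by simp))
    exact (Complex.continuous_ofReal.continuousAt.comp h1).mul (by fun_prop)

/-! ### Asymptotics of the binomial coefficient -/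

lemma Gamma_add_nat_prod {s : ℝ} (hs : 0 < s) (n : ℕ) :
    Real.Gamma (s + n) = Real.Gamma s * ∏ j ∈ Finset.range n, (s + j) := by
  induction n with
  | zero => simp
  | succ n ih =>
    rw [Finset.prod_range_succ, ← mul_assoc, ← ih, Nat.cast_succ, ← add_assoc,
      Real.Gamma_add_one (by positivity), mul_comm]

/-- `Γ(b + n + 1) ~ n^b n!`, a form of Euler's limit formula for the Gamma function. -/
lemma Gamma_asymp {b : ℝ} (hb : -1 < b) :
    Tendsto (fun n : ℕ => Real.Gamma (b + n + 1) / ((n : ℝ) ^ b * n.factorial)) atTop (𝓝 1) := by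
  have hs : 0 < b + 1 := by linarith
  have hG := (Real.Gamma_pos_of_pos hs).ne'
  have h1 := (tendsto_const_nhds (x := Real.Gamma (b + 1))).div
    (Real.GammaSeq_tendsto_Gamma (b + 1)) hG
  have h2 := h1.mul (tendsto_natCast_div_add_atTop (b + 1))
  rw [div_self hG, one_mul] at h2
  refine h2.congr' ?_
  filter_upwards [eventually_gt_atTop 0] with n hn
  have hn' : (0 : ℝ) < n := by exact_mod_cast hn
  have hprod : 0 < ∏ j ∈ Finset.range n, (b + 1 + j) :=
    Finset.prod_pos fun j _ => by positivity
  have e : b + n + 1 = b + 1 + n := by ring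
  have hx : (0 : ℝ) < n ^ b := Real.rpow_pos_of_pos hn' b
  have hd : (n : ℝ) + (b + 1) ≠ 0 := by positivity
  have hd' : b + 1 + (n : ℝ) ≠ 0 := by positivity
  simp only [Pi.div_apply, Real.GammaSeq]
  rw [e, Gamma_add_nat_prod hs, Finset.prod_range_succ, Real.rpow_add hn', Real.rpow_one]
  have : (n.factorial : ℝ) ≠ 0 := by positivity
  field_simp
  ring

lemma rbinom_pos {a b : ℝ} (ha : -1 < a) (hb : -1 < b) (hab : -1 < a - b) : 0 < rbinom a b :=
  div_pos (Real.Gamma_pos_of_pos (by linarith))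
    (mul_pos (Real.Gamma_pos_of_pos (by linarith)) (Real.Gamma_pos_of_pos (by linarith)))

lemma rbinom_rec {a b : ℝ} (ha : -1 < a) (hb : -1 < b) (hab : -1 < a - b) :
    (b + 1) * (a - b + 1) * rbinom (a + 2) (b + 1) = (a + 2) * (a + 1) * rbinom a b := by
  have h1 : a + 1 ≠ 0 := by linarith
  have h2 : a + 1 + 1 ≠ 0 := by linarith
  have h3 : b + 1 ≠ 0 := by linarith
  have h4 : a - b + 1 ≠ 0 := by linarith
  have g1 := (Real.Gamma_pos_of_pos (show 0 < b + 1 by linarith)).ne'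
  have g2 := (Real.Gamma_pos_of_pos (show 0 < a - b + 1 by linarith)).ne'
  unfold rbinom
  rw [show a + 2 + 1 = a + 1 + 1 + 1 by ring, show a + 2 - (b + 1) + 1 = a - b + 1 + 1 by ring,
    Real.Gamma_add_one h2, Real.Gamma_add_one h1, Real.Gamma_add_one h3, Real.Gamma_add_one h4]
  field_simp
  ring

lemma rbinom_ratio_tendsto {a b : ℝ} (ha : -1 < a) (hb : -1 < b) (hab : -1 < a - b) :
    Tendsto (fun n : ℕ => rbinom (a + 2 * n) (b + n) / rbinom (2 * n) n) atTop
      (𝓝 ((2 : ℝ) ^ a)) := by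
  have hA := (Gamma_asymp ha).comp (tendsto_id.const_mul_atTop' (show 0 < 2 by norm_num))
  have h := ((hA.div ((Gamma_asymp hb).mul (Gamma_asymp hab)) (by norm_num)).const_mul
    ((2 : ℝ) ^ a))
  simp only [mul_one, div_one] at h
  refine h.congr' ?_
  filter_upwards [eventually_gt_atTop 0] with n hn
  have hn' : (0 : ℝ) < n := by exact_mod_cast hn
  have hx : (0 : ℝ) < n ^ b := Real.rpow_pos_of_pos hn' b
  have hy : (0 : ℝ) < n ^ (a - b) := Real.rpow_pos_of_pos hn' _
  have hz : (0 : ℝ) < 2 ^ a := Real.rpow_pos_of_pos two_pos _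
  have g1 := (Real.Gamma_pos_of_pos (show 0 < b + n + 1 by linarith)).ne'
  have g2 := (Real.Gamma_pos_of_pos (show 0 < a - b + n + 1 by linarith)).ne'
  have f1 : (n.factorial : ℝ) ≠ 0 := by positivity
  have f2 : ((2 * n).factorial : ℝ) ≠ 0 := by positivity
  have e1 : ((2 : ℝ) * n) ^ a = 2 ^ a * (n ^ b * n ^ (a - b)) := by
    rw [Real.mul_rpow two_pos.le hn'.le, ← Real.rpow_add hn']; congr 2; ring
  have e2 : rbinom (2 * n) n = (2 * n).factorial / (n.factorial * n.factorial) := by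
    have h2 : Real.Gamma (2 * n + 1) = (2 * n).factorial := by
      exact_mod_cast Real.Gamma_nat_eq_factorial (2 * n)
    rw [rbinom, h2, show (2 : ℝ) * n - n + 1 = n + 1 by ring, Real.Gamma_nat_eq_factorial]
  rw [e2, rbinom, show a + 2 * n - (b + n) + 1 = a - b + n + 1 by ring]
  simp only [Pi.div_apply, Function.comp, id]
  push_cast
  rw [e1]
  field_simp

/-! ### Evaluation of the integral -/

/-- The integral and the binomial coefficient obey the same recurrence under
`(a, b) ↦ (a + 2, b + 1)`. -/
lemma cosInt_mul_rbinom {a b : ℝ} (ha : -1 < a) (hb : -1 < b) (hab : -1 < a - b) (n : ℕ) :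
    cosInt (a + 2 * n) (a / 2 - b) * rbinom a b =
      cosInt a (a / 2 - b) * rbinom (a + 2 * n) (b + n) := by
  induction n with
  | zero => simp
  | succ n ih =>
    have hn : (0 : ℝ) ≤ n := n.cast_nonneg
    have h1 := cosInt_rec (a := a + 2 * n) (by linarith) (a / 2 - b)
    have h2 := rbinom_rec (a := a + 2 * n) (b := b + n) (by linarith) (by linarith) (by linarith)
    have h2' : (((b + n + 1) * (a + 2 * n - (b + n) + 1) : ℝ) : ℂ) *
        (rbinom (a + 2 * n + 2) (b + n + 1) : ℂ) =
        (((a + 2 * n + 2) * (a + 2 * n + 1) : ℝ) : ℂ) * (rbinom (a + 2 * n) (b + n) : ℂ) := by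
      exact_mod_cast h2
    rw [show (a + 2 * n + 2) ^ 2 / 4 - (a / 2 - b) ^ 2 =
      (b + n + 1) * (a + 2 * n - (b + n) + 1) by ring] at h1
    have hk : (((b + n + 1) * (a + 2 * n - (b + n) + 1) : ℝ) : ℂ) ≠ 0 :=
      Complex.ofReal_ne_zero.2 (mul_pos (by linarith) (by linarith)).ne'
    rw [show a + 2 * ((n + 1 : ℕ) : ℝ) = a + 2 * n + 2 by push_cast; ring,
      show b + ((n + 1 : ℕ) : ℝ) = b + n + 1 by push_cast; ring]
    apply mul_left_cancel₀ hk
    linear_combination (rbinom a b : ℂ) * h1 - cosInt a (a / 2 - b) * h2' +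
      (((a + 2 * n + 2) * (a + 2 * n + 1) : ℝ) : ℂ) * ih

lemma cosInt_two_mul_nat (n : ℕ) : cosInt (2 * n) 0 = 2 * π * rbinom (2 * n) n := by
  have h := cosInt_mul_rbinom (a := 0) (b := 0) (by norm_num) (by norm_num) (by norm_num) n
  have h0 : cosInt 0 0 = 2 * π := by simp [cosInt]; ring
  have h1 : rbinom 0 0 = 1 := by simp [rbinom]
  simpa [h0, h1] using h

lemma cosInt_eq {a b : ℝ} (ha : -1 < a) (hb : -1 < b) (hab : -1 < a - b) :
    cosInt a (a / 2 - b) = 2 * π * rbinom a b := by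
  have hL := (cosInt_ratio_tendsto ha (a / 2 - b)).mul_const (2 * π * rbinom a b : ℂ)
  have hR := ((Complex.continuous_ofReal.tendsto _).comp
    (rbinom_ratio_tendsto ha hb hab)).const_mul (cosInt a (a / 2 - b))
  have h2 : ((((2 : ℝ) ^ a : ℝ)) : ℂ) ≠ 0 :=
    Complex.ofReal_ne_zero.2 (Real.rpow_pos_of_pos two_pos _).ne'
  have heq := tendsto_nhds_unique hL (hR.congr fun n => ?_)
  · apply mul_right_cancel₀ h2
    rw [← heq]; ring
  · have hn : (0 : ℝ) ≤ n := n.cast_nonneg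
    have hr : (rbinom (2 * n) n : ℂ) ≠ 0 := Complex.ofReal_ne_zero.2
      (rbinom_pos (by linarith) (by linarith) (by linarith)).ne'
    have hp : (π : ℂ) ≠ 0 := Complex.ofReal_ne_zero.2 pi_ne_zero
    rw [cosInt_two_mul_nat]
    simp only [Function.comp]
    push_cast
    have h := cosInt_mul_rbinom ha hb hab n
    generalize cosInt a (a / 2 - b) = X at *
    generalize cosInt (a + 2 * n) (a / 2 - b) = Y at *
    field_simp
    linear_combination -h

/-! ### The principal branch -/

/-- On `(-π, π)` the principal branch of `(1 + e^{iω})^a` is `(2 cos (ω/2))^a e^{iaω/2}`. -/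
lemma one_add_exp_cpow (a : ℝ) {ω : ℝ} (h : ω ∈ Ioo (-π) π) :
    (1 + Complex.exp (Complex.I * ω)) ^ (a : ℂ) =
      (((2 * Real.cos (ω / 2)) ^ a : ℝ) : ℂ) * Complex.exp (Complex.I * ω * (a / 2)) := by
  have hp := two_cos_pos h
  have e : 1 + Complex.exp (Complex.I * ω) =
      ((2 * Real.cos (ω / 2) : ℝ) : ℂ) * Complex.exp (Complex.I * ω / 2) := by
    push_cast
    rw [Complex.two_cos, add_mul, ← Complex.exp_add, ← Complex.exp_add, add_comm]
    congr 1
    · congr 1; ring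
    · rw [← Complex.exp_zero]; congr 1; ring
  have him : (Complex.I * ω / 2).im = ω / 2 := by simp
  have hlog : Complex.log (Complex.exp (Complex.I * ω / 2)) = Complex.I * ω / 2 :=
    Complex.log_exp (by rw [him]; linarith [h.1, pi_pos]) (by rw [him]; linarith [h.2, pi_pos])
  rw [e, Complex.cpow_def_of_ne_zero
    (mul_ne_zero (Complex.ofReal_ne_zero.2 hp.ne') (Complex.exp_ne_zero _)),
    Complex.log_ofReal_mul hp (Complex.exp_ne_zero _), hlog, add_mul, Complex.exp_add,
    Real.rpow_def_of_pos hp]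
  push_cast
  congr 2
  ring


/-- For real `a, b` with `a > -1`, `b > -1`, `a - b > -1`,
`(1/(2π)) ∫_{-π}^{π} (2 cos(ω/2))^a e^{iω(a/2-b)} dω = Γ(a+1)/(Γ(b+1)Γ(a-b+1))`, and
equivalently, with the principal branch `(1+e^{iω})^a`,
`(1/(2π)) ∫_{-π}^{π} (1+e^{iω})^a e^{-iωb} dω = binom a b`. -/
theorem egorychev_binomial_integral (a b : ℝ) (ha : -1 < a) (hb : -1 < b) (hab : -1 < a - b) :
    ((1 / (2 * π) : ℝ) : ℂ) *
        ∫ ω in (-π)..π,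
          (((2 * Real.cos (ω / 2)) ^ a : ℝ) : ℂ) *
            Complex.exp (Complex.I * ω * ((a / 2 : ℝ) - b)) = (rbinom a b : ℂ) ∧
    ((1 / (2 * π) : ℝ) : ℂ) *
        ∫ ω in (-π)..π,
          (1 + Complex.exp (Complex.I * ω)) ^ (a : ℂ) *
            Complex.exp (-(Complex.I * ω * (b : ℝ))) = (rbinom a b : ℂ) := by
  have hpi : (π : ℂ) ≠ 0 := Complex.ofReal_ne_zero.2 pi_ne_zero
  have h1 : ((1 / (2 * π) : ℝ) : ℂ) * cosInt a (a / 2 - b) = (rbinom a b : ℂ) := by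
    rw [cosInt_eq ha hb hab]
    push_cast
    field_simp
  constructor
  · rw [← h1, cosInt]
    push_cast
    rfl
  · rw [← h1, cosInt]
    congr 1
    refine intervalIntegral.integral_congr_Ioo_of_le (by linarith [pi_pos]) fun ω hω => ?_
    rw [one_add_exp_cpow a hω, mul_assoc, ← Complex.exp_add]
    congr 2
    push_cast
    ring
end

section
/- Let α ∈ (0, 2) and let n be an integer. Then (1/(2π)) ∫_{0}^{2π} (2 sin(θ/2))^α · cos(nθ) dθ = (-1)^n · binom(α, α/2 + n). (Note sin(θ/2) ≥ 0 for θ ∈ [0, 2π], so the real power is well defined.) -/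
/-!
Write `I n` for the integral of `(2 sin (θ/2)) ^ α * cos (n θ)` over `[0, 2π]`. Integrating the
derivative of `(2 sin (θ/2)) ^ (α + 1) * cos ((n + 1/2) θ)`, which vanishes at both endpoints,
gives the two-term recurrence `(α/2 + n + 1) * I (n + 1) = -(α/2 - n) * I n`
(`integral_recurrence`). The right-hand side obeys the same recurrence because
`Γ (s + 1) = s Γ s` (`rbinom_recurrence`); as `0 < α/2 < 1`, neither coefficient vanishes, so
the identity propagates from `n = 0` to all integers in both directions.

For `n = 0`, the substitution `t = (1 - cos (θ/2)) / 2`, for which `t (1 - t) = (sin (θ/2) / 2) ^ 2`,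
turns the integral into a Beta integral with both parameters equal to `(α + 1) / 2`, and Legendre's
duplication formula rewrites its value as `2π Γ (α + 1) / Γ (α/2 + 1) ^ 2` (`integral_zero`).
-/

open MeasureTheory Real Set

theorem integral_recurrence {α : ℝ} (hα : 0 < α) (x : ℝ) :
    (α / 2 + x + 1) * ∫ θ in (0 : ℝ)..(2 * π),
        (2 * Real.sin (θ / 2)) ^ α * Real.cos ((x + 1) * θ)
      = -(α / 2 - x) * ∫ θ in (0 : ℝ)..(2 * π),
        (2 * Real.sin (θ / 2)) ^ α * Real.cos (x * θ) := by
  have hc : ∀ y : ℝ, Continuous fun θ : ℝ => (2 * Real.sin (θ / 2)) ^ α * Real.cos (y * θ) := by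
    intro y
    exact (Continuous.rpow_const (by fun_prop) (fun _ => Or.inr hα.le)).mul (by fun_prop)
  have hder : ∀ θ : ℝ, HasDerivAt
      (fun θ => (2 * Real.sin (θ / 2)) ^ (α + 1) * Real.cos ((x + 1 / 2) * θ))
      ((α / 2 + x + 1) * ((2 * Real.sin (θ / 2)) ^ α * Real.cos ((x + 1) * θ))
        + (α / 2 - x) * ((2 * Real.sin (θ / 2)) ^ α * Real.cos (x * θ))) θ := by
    intro θ
    have h1 : HasDerivAt (fun θ : ℝ => 2 * Real.sin (θ / 2)) (Real.cos (θ / 2)) θ := by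
      have := (((hasDerivAt_id' θ).div_const 2).sin).const_mul 2
      exact this.congr_deriv (by ring)
    have h2 := h1.rpow_const (p := α + 1) (Or.inr (by linarith))
    have h3 := ((hasDerivAt_id' θ).const_mul (x + 1 / 2)).cos
    refine (h2.mul h3).congr_deriv ?_
    -- At a zero of the base both sides vanish, because `α + 1 ≠ 0`.
    have hpow : (2 * Real.sin (θ / 2)) ^ (α + 1)
        = (2 * Real.sin (θ / 2)) ^ α * (2 * Real.sin (θ / 2)) := by
      by_cases h0 : 2 * Real.sin (θ / 2) = 0
      · rw [h0, Real.zero_rpow (by linarith : α + 1 ≠ 0), mul_zero]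
      · rw [Real.rpow_add_one h0]
    have e1 : (x + 1) * θ = (x + 1 / 2) * θ + θ / 2 := by ring
    have e2 : x * θ = (x + 1 / 2) * θ - θ / 2 := by ring
    rw [hpow, e1, e2, Real.cos_add, Real.cos_sub, add_sub_cancel_right]
    ring
  have hint := intervalIntegral.integral_eq_sub_of_hasDerivAt (a := 0) (b := 2 * π)
    (fun θ _ => hder θ)
    ((((hc (x + 1)).const_mul _).add ((hc x).const_mul _)).intervalIntegrable _ _)
  rw [intervalIntegral.integral_add (((hc _).const_mul _).intervalIntegrable _ _)
    (((hc _).const_mul _).intervalIntegrable _ _), intervalIntegral.integral_const_mul,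
    intervalIntegral.integral_const_mul] at hint
  have hz : 2 * π / 2 = π := by ring
  simp only [hz, Real.sin_pi, zero_div, Real.sin_zero, mul_zero,
    Real.zero_rpow (by linarith : α + 1 ≠ 0), zero_mul, sub_zero] at hint
  linarith

theorem integral_beta {a : ℝ} (ha : 0 < a) :
    ∫ t in (0 : ℝ)..1, (t * (1 - t)) ^ (a - 1) = Real.Gamma a ^ 2 / Real.Gamma (2 * a) := by
  have h := Complex.betaIntegral_eq_Gamma_mul_div (a : ℂ) a (by simpa) (by simpa)
  have h2 : Complex.betaIntegral a a
      = ((∫ t in (0 : ℝ)..1, (t * (1 - t)) ^ (a - 1) : ℝ) : ℂ) := by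
    rw [Complex.betaIntegral, ← intervalIntegral.integral_ofReal]
    refine intervalIntegral.integral_congr fun t ht => ?_
    rw [uIcc_of_le zero_le_one] at ht
    have h1 : 0 ≤ 1 - t := by linarith [ht.2]
    rw [Real.mul_rpow ht.1 h1, Complex.ofReal_mul, Complex.ofReal_cpow ht.1,
      Complex.ofReal_cpow h1]
    push_cast
    rfl
  rw [h2, ← Complex.ofReal_add, Complex.Gamma_ofReal, Complex.Gamma_ofReal, ← two_mul] at h
  rw [sq]
  exact_mod_cast h

theorem integral_zero {α : ℝ} (hα : 0 < α) :
    ∫ θ in (0 : ℝ)..(2 * π), (2 * Real.sin (θ / 2)) ^ α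
      = 2 * π * (Real.Gamma (α + 1) / Real.Gamma (α / 2 + 1) ^ 2) := by
  have hsub : ∫ θ in (0 : ℝ)..(2 * π),
      ((fun t : ℝ => (t * (1 - t)) ^ ((α + 1) / 2 - 1)) ∘ fun θ => (1 - Real.cos (θ / 2)) / 2) θ
        * (Real.sin (θ / 2) / 4)
      = ∫ t in (0 : ℝ)..1, (t * (1 - t)) ^ ((α + 1) / 2 - 1) := by
    have := intervalIntegral.integral_comp_mul_deriv_of_deriv_nonneg (a := 0) (b := 2 * π)
      (f := fun θ => (1 - Real.cos (θ / 2)) / 2) (f' := fun θ => Real.sin (θ / 2) / 4)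
      (g := fun t : ℝ => (t * (1 - t)) ^ ((α + 1) / 2 - 1)) (by fun_prop)
      (by
        intro θ _
        have := ((((hasDerivAt_id' θ).div_const 2).cos).const_sub 1).div_const 2
        refine this.congr_deriv ?_
        ring)
      (by
        intro θ hθ
        rw [min_eq_left two_pi_pos.le, max_eq_right two_pi_pos.le] at hθ
        have := Real.sin_nonneg_of_nonneg_of_le_pi (x := θ / 2) (by linarith [hθ.1])
          (by linarith [hθ.2])
        positivity)
    rw [this]
    have hz : 2 * π / 2 = π := by ring
    simp only [hz, zero_div, Real.cos_zero, Real.cos_pi, sub_self]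
    norm_num
  have hcongr : ∫ θ in (0 : ℝ)..(2 * π), (2 * Real.sin (θ / 2)) ^ α
      = ∫ θ in (0 : ℝ)..(2 * π), 2 * 4 ^ α *
      (((fun t : ℝ => (t * (1 - t)) ^ ((α + 1) / 2 - 1)) ∘ fun θ => (1 - Real.cos (θ / 2)) / 2) θ
        * (Real.sin (θ / 2) / 4)) := by
    refine intervalIntegral.integral_congr fun θ hθ => ?_
    rw [uIcc_of_le two_pi_pos.le] at hθ
    have hs : 0 ≤ Real.sin (θ / 2) := Real.sin_nonneg_of_nonneg_of_le_pi (by linarith [hθ.1])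
      (by linarith [hθ.2])
    simp only [Function.comp]
    rcases hs.eq_or_lt with h0 | h0
    · simp [← h0, Real.zero_rpow hα.ne']
    have e : (1 - Real.cos (θ / 2)) / 2 * (1 - (1 - Real.cos (θ / 2)) / 2)
        = (Real.sin (θ / 2) / 2) ^ (2 : ℝ) := by
      rw [Real.rpow_two]
      linear_combination -(1 / 4) * Real.sin_sq_add_cos_sq (θ / 2)
    have e2 : 2 * Real.sin (θ / 2) = 4 * (Real.sin (θ / 2) / 2) := by ring
    rw [e, ← Real.rpow_mul (by positivity), show 2 * ((α + 1) / 2 - 1) = α - 1 by ring, e2,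
      Real.mul_rpow (by norm_num) (by positivity), Real.rpow_sub_one (by positivity)]
    field_simp
    ring
  have hdup := Real.Gamma_mul_Gamma_add_half ((α + 1) / 2)
  rw [show (α + 1) / 2 + 1 / 2 = α / 2 + 1 by ring, show 2 * ((α + 1) / 2) = α + 1 by ring,
    show 1 - (α + 1) = -α by ring] at hdup
  have hG : 0 < Real.Gamma (α / 2 + 1) := Real.Gamma_pos_of_pos (by linarith)
  have hG1 : 0 < Real.Gamma (α + 1) := Real.Gamma_pos_of_pos (by linarith)
  rw [hcongr, intervalIntegral.integral_const_mul, hsub, integral_beta (by linarith),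
    show 2 * ((α + 1) / 2) = α + 1 by ring]
  have h4 : (4 : ℝ) ^ α * (2 ^ (-α)) ^ 2 = 1 := by
    rw [← Real.rpow_mul_natCast (by norm_num), show (4 : ℝ) = 2 ^ (2 : ℝ) by norm_num,
      ← Real.rpow_mul (by norm_num), ← Real.rpow_add (by norm_num)]
    norm_num
    ring_nf
    simp
  have hsq : Real.Gamma ((α + 1) / 2) ^ 2 * Real.Gamma (α / 2 + 1) ^ 2
      = Real.Gamma (α + 1) ^ 2 * (2 ^ (-α)) ^ 2 * π := by
    rw [← mul_pow, hdup, mul_pow, mul_pow, Real.sq_sqrt pi_pos.le]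
  -- Named, so that `field_simp` does not rewrite the arguments of `Γ`.
  generalize Real.Gamma (α / 2 + 1) = G at *
  field_simp
  linear_combination 4 ^ α * hsq + Real.Gamma (α + 1) ^ 2 * π * h4

/-- The hypotheses are what `Γ (s + 1) = s Γ s` needs, as the junk value `Γ 0 = 0` breaks it at
`s = 0`. The identity holds even when a later argument of `Γ` is a pole. -/
theorem rbinom_recurrence {α x : ℝ} (h1 : α / 2 + x + 1 ≠ 0) (h2 : α / 2 - x ≠ 0) :
    (α / 2 + x + 1) * rbinom α (α / 2 + (x + 1)) = (α / 2 - x) * rbinom α (α / 2 + x) := by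
  unfold rbinom
  rw [show α / 2 + (x + 1) + 1 = (α / 2 + x + 1) + 1 by ring,
    show α - (α / 2 + (x + 1)) + 1 = α / 2 - x by ring,
    show α - (α / 2 + x) + 1 = (α / 2 - x) + 1 by ring,
    Real.Gamma_add_one h1, Real.Gamma_add_one h2]
  generalize α / 2 + x + 1 = u at *
  generalize α / 2 - x = v at *
  field_simp

/-- For `α ∈ (0,2)` and an integer `n`,
`(1/(2π)) ∫₀^{2π} (2 sin(θ/2))^α cos(nθ) dθ = (-1)^n binom α (α/2 + n)`. -/
theorem riesz_stencil_fourier_coeff (α : ℝ) (hα : α ∈ Set.Ioo (0 : ℝ) 2) (n : ℤ) :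
    (1 / (2 * π)) *
        ∫ θ in (0 : ℝ)..(2 * π), (2 * Real.sin (θ / 2)) ^ α * Real.cos (n * θ)
      = (-1 : ℝ) ^ n * rbinom α (α / 2 + n) := by
  obtain ⟨h0, h2⟩ := hα
  -- `α / 2` lies strictly between `0` and `1`, hence is not an integer.
  have hne : ∀ m : ℤ, α / 2 ≠ m := by
    intro m hm
    have a1 : (0 : ℝ) < m := by linarith
    have a2 : (m : ℝ) < 1 := by linarith
    have b1 : 0 < m := by exact_mod_cast a1
    have b2 : m < 1 := by exact_mod_cast a2
    omega
  have hA : ∀ m : ℤ, α / 2 + m + 1 ≠ 0 := by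
    intro m h
    apply hne (-m - 1)
    push_cast
    linarith
  have hB : ∀ m : ℤ, α / 2 - m ≠ 0 := fun m => sub_ne_zero.mpr (hne m)
  -- The common recurrence makes the identities at `m` and at `m + 1` equivalent.
  have step : ∀ m : ℤ, ((1 / (2 * π)) *
        ∫ θ in (0 : ℝ)..(2 * π), (2 * Real.sin (θ / 2)) ^ α * Real.cos (m * θ))
      = (-1 : ℝ) ^ m * rbinom α (α / 2 + m) ↔ ((1 / (2 * π)) *
        ∫ θ in (0 : ℝ)..(2 * π), (2 * Real.sin (θ / 2)) ^ α * Real.cos (((m + 1 : ℤ) : ℝ) * θ))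
      = (-1 : ℝ) ^ (m + 1) * rbinom α (α / 2 + ((m + 1 : ℤ) : ℝ)) := by
    intro m
    have hI := integral_recurrence h0 (m : ℝ)
    have hR := rbinom_recurrence (hA m) (hB m)
    rw [zpow_add_one₀ (by norm_num)]
    push_cast
    constructor <;> intro h
    · apply mul_left_cancel₀ (hA m)
      linear_combination (1 / (2 * π)) * hI - (α / 2 - m) * h + (-1 : ℝ) ^ m * hR
    · apply mul_left_cancel₀ (hB m)
      linear_combination (1 / (2 * π)) * hI - (α / 2 + m + 1) * h + (-1 : ℝ) ^ m * hR
  induction n using Int.induction_on with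
  | zero =>
    simp only [Int.cast_zero, zero_mul, Real.cos_zero, mul_one, zpow_zero, one_mul, add_zero]
    rw [integral_zero h0, rbinom, show α - α / 2 + 1 = α / 2 + 1 by ring, ← sq]
    field_simp
  | succ k ih => exact (step k).mp ih
  | pred k ih =>
    apply (step _).mpr
    rwa [sub_add_cancel]
end

section
/- Let α ∈ (0, 2). For every real x, the doubly infinite series ∑_{n ∈ ℤ} (-1)^n · binom(α, α/2 + n) · e^{inx} converges absolutely and its sum equals |2 sin(x/2)|^α. (In particular, the discrete-time Fourier transform of the fractional central difference stencil with coefficients (-1)^n binom(α, α/2+n) is the symbol |2 sin(x/2)|^α.) -/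
/-!
Write `c n = (-1)^n binom α (α/2+n)` and `s x = |2 sin (x/2)|^α`. The numbers `c n` are the Fourier
coefficients of the continuous `2π`-periodic function `s`, and they are absolutely summable, so the
Fourier series of `s` converges to `s` at every point.

Both facts come from one recurrence. The functional equation of `Γ` gives
`(α/2 + n + 1) c (n+1) = (n - α/2) c n` for all integers `n` (`stencil_succ`). Integrating the
derivative of `(2 sin (x/2))^(α+1) e^{-i(n+1/2)x}` over `[0, 2π]` shows that the Fourier coefficients
of `s` satisfy the same recurrence (`symbolIntegral_succ`). Its coefficients never vanish, as `α/2`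
is not an integer, so both sequences are determined by their values at `0`; these agree by a beta
integral and Legendre's duplication formula (`integral_symbol_zero`). The recurrence also makes the
partial sums of `|c n|` over `n ≥ 1` telescope, whence summability (`summable_stencil`).
-/

open MeasureTheory Real Set

/-! ### The stencil coefficients -/

/-- The coefficient `(-1)^n binom α (α/2+n)` of the stencil. -/
noncomputable def stencil (α : ℝ) (n : ℤ) : ℝ := (-1 : ℝ) ^ n * rbinom α (α / 2 + n)

lemma half_add_int_ne_zero {α : ℝ} (hα : α ∈ Ioo (0 : ℝ) 2) (m : ℤ) : α / 2 + m ≠ 0 := by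
  intro h
  have h0 : 0 < (-m : ℝ) := by linarith [hα.1]
  have h1 : (-m : ℝ) < 1 := by linarith [hα.2]
  have h0' : (0 : ℤ) < -m := by exact_mod_cast h0
  have h1' : -m < (1 : ℤ) := by exact_mod_cast h1
  omega

lemma stencil_succ {α : ℝ} (hα : α ∈ Ioo (0 : ℝ) 2) (n : ℤ) :
    (α / 2 + n + 1) * stencil α (n + 1) = (n - α / 2) * stencil α n := by
  have h1 : α / 2 + n + 1 ≠ 0 := by
    have := half_add_int_ne_zero hα (n + 1)
    push_cast at this
    rwa [← add_assoc] at this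
  have h2 : α / 2 - n ≠ 0 := by
    have := half_add_int_ne_zero hα (-n)
    push_cast at this
    rwa [← sub_eq_add_neg] at this
  have e1 : Gamma (α / 2 + n + 1 + 1) = (α / 2 + n + 1) * Gamma (α / 2 + n + 1) :=
    Real.Gamma_add_one h1
  have e2 : Gamma (α / 2 - n + 1) = (α / 2 - n) * Gamma (α / 2 - n) := Real.Gamma_add_one h2
  have e3 : α - (α / 2 + n) + 1 = α / 2 - n + 1 := by ring
  have e4 : α - (α / 2 + (n + 1)) + 1 = α / 2 - n := by ring
  have e5 : α / 2 + ((n : ℝ) + 1) + 1 = α / 2 + n + 1 + 1 := by ring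
  rw [stencil, stencil, zpow_add_one₀ (by norm_num)]
  simp only [rbinom]
  push_cast
  rw [e3, e4, e5, e1, e2]
  have e6 : (n : ℝ) - α / 2 = - (α / 2 - n) := by ring
  rw [e6]
  clear e1 e2 e3 e4 e5 e6
  generalize Gamma (α / 2 + n + 1) = G
  generalize Gamma (α / 2 - n) = H
  generalize α / 2 + n + 1 = A at *
  generalize α / 2 - n = B at *
  have i1 := mul_inv_cancel₀ h1
  have i2 := mul_inv_cancel₀ h2
  -- The products are handled through inverses, so that no nonvanishing of `G` and `H` is needed.
  simp only [div_eq_mul_inv, mul_inv]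
  linear_combination (-(-1) ^ n * Gamma (α + 1) * G⁻¹ * H⁻¹) * i1
    + ((-1) ^ n * Gamma (α + 1) * G⁻¹ * H⁻¹) * i2

lemma stencil_neg (α : ℝ) (n : ℤ) : stencil α (-n) = stencil α n := by
  have e1 : α / 2 + (-n : ℝ) + 1 = α - (α / 2 + n) + 1 := by ring
  have e2 : α - (α / 2 + (-n : ℝ)) + 1 = α / 2 + n + 1 := by ring
  have e3 : (-1 : ℝ) ^ (-n) = (-1) ^ n := by rw [zpow_neg, ← inv_zpow]; norm_num
  simp only [stencil, rbinom]
  push_cast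
  rw [e1, e2, e3, mul_comm (Gamma (α - (α / 2 + n) + 1))]

/-- The recurrence gives `α |c_{n+1}| = (n + 1 + α/2) |c_{n+1}| - (n + 2 + α/2) |c_{n+2}|`, so the
partial sums of `|c_n|` over `n ≥ 1` telescope and stay bounded; `c_{-n} = c_n` covers `n < 0`. -/
lemma summable_stencil {α : ℝ} (hα : α ∈ Ioo (0 : ℝ) 2) :
    Summable (fun n : ℤ => |stencil α n|) := by
  have key : Summable (fun n : ℕ => |stencil α n|) := by
    rw [← summable_nat_add_iff 1]
    have step : ∀ n : ℕ, α * |stencil α ((n + 1 : ℕ) : ℤ)|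
        = (n + 1 + α / 2) * |stencil α ((n + 1 : ℕ) : ℤ)|
          - (n + 2 + α / 2) * |stencil α ((n + 2 : ℕ) : ℤ)| := by
      intro n
      have h := congrArg abs (stencil_succ hα ((n + 1 : ℕ) : ℤ))
      have e : ((n + 1 : ℕ) : ℤ) + 1 = ((n + 2 : ℕ) : ℤ) := by push_cast; ring
      have hn : (0 : ℝ) ≤ n := n.cast_nonneg
      rw [abs_mul, abs_mul, e] at h
      push_cast at h ⊢
      have p1 : 0 < α / 2 + (n + 1) + 1 := by linarith [hα.1]
      have p2 : 0 < (n : ℝ) + 1 - α / 2 := by linarith [hα.2]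
      rw [abs_of_pos p1, abs_of_pos p2] at h
      linear_combination h
    have tele : ∀ N : ℕ, ∑ i ∈ Finset.range N, |stencil α ((i + 1 : ℕ) : ℤ)|
        = ((1 + α / 2) * |stencil α 1| - (N + 1 + α / 2) * |stencil α ((N + 1 : ℕ) : ℤ)|) / α := by
      intro N
      rw [eq_div_iff hα.1.ne']
      induction N with
      | zero => simp
      | succ k ih =>
        rw [Finset.sum_range_succ, add_mul, ih, mul_comm _ α, step k]
        push_cast
        ring
    refine summable_of_sum_range_le (c := (1 + α / 2) * |stencil α 1| / α)
      (fun n => abs_nonneg _) fun N => ?_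
    rw [tele]
    have hN : (0 : ℝ) ≤ N := N.cast_nonneg
    have := hα.1
    gcongr
    exact sub_le_self _ (by positivity)
  refine Summable.of_nat_of_neg key ?_
  simpa only [stencil_neg] using key

/-! ### The mean value of the symbol -/

/-- The substitution `u = (1 - cos t) / 2` turns the beta integral `B((α+1)/2, (α+1)/2)` into an
integral of a power of the sine. -/
lemma integral_sin_rpow {α : ℝ} (hα : α ∈ Ioo (0 : ℝ) 2) :
    ∫ t in (0 : ℝ)..π, sin t ^ α
      = 2 ^ α * ProbabilityTheory.beta ((α + 1) / 2) ((α + 1) / 2) := by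
  have himg : (fun t : ℝ => (1 - cos t) / 2) '' Ioo 0 π = Ioo 0 1 := by
    ext u
    constructor
    · rintro ⟨t, ht, rfl⟩
      have h1 : cos t < 1 := by
        have := Real.strictAntiOn_cos (left_mem_Icc.2 pi_pos.le) ⟨ht.1.le, ht.2.le⟩ ht.1
        simpa using this
      have h2 : -1 < cos t := by
        have := Real.strictAntiOn_cos ⟨ht.1.le, ht.2.le⟩ (right_mem_Icc.2 pi_pos.le) ht.2
        simpa using this
      constructor <;> dsimp only <;> linarith
    · rintro ⟨h0, h1⟩
      refine ⟨arccos (1 - 2 * u), ⟨arccos_pos.2 (by linarith), ?_⟩, ?_⟩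
      · refine lt_of_le_of_ne (arccos_le_pi _) fun h => ?_
        rw [arccos_eq_pi] at h
        linarith
      · dsimp only
        rw [cos_arccos (by linarith) (by linarith)]
        ring
  have hinj : InjOn (fun t : ℝ => (1 - cos t) / 2) (Ioo 0 π) := fun a ha b hb h =>
    injOn_cos ⟨ha.1.le, ha.2.le⟩ ⟨hb.1.le, hb.2.le⟩ (by dsimp only at h; linarith)
  have hsub := integral_image_eq_integral_abs_deriv_smul (s := Ioo 0 π)
    (f := fun t : ℝ => (1 - cos t) / 2) (f' := fun t => sin t / 2) measurableSet_Ioo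
    (fun t _ => by
      have := (((hasDerivAt_cos t).const_sub 1).div_const 2).hasDerivWithinAt (s := Ioo 0 π)
      simpa using this) hinj
    (fun u => u ^ ((α + 1) / 2 - 1) * (1 - u) ^ ((α + 1) / 2 - 1))
  have ha : 0 < (α + 1) / 2 := by linarith [hα.1]
  have hbeta : ProbabilityTheory.beta ((α + 1) / 2) ((α + 1) / 2)
      = ∫ u in Ioo (0 : ℝ) 1, u ^ ((α + 1) / 2 - 1) * (1 - u) ^ ((α + 1) / 2 - 1) := by
    rw [ProbabilityTheory.beta_eq_betaIntegralReal _ _ ha ha, Complex.betaIntegral,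
      intervalIntegral.integral_of_le zero_le_one, integral_Ioc_eq_integral_Ioo,
      ← Complex.ofReal_re (∫ u in Ioo (0 : ℝ) 1, _)]
    congr 1
    rw [← integral_complex_ofReal]
    refine setIntegral_congr_fun measurableSet_Ioo fun u hu => ?_
    rw [Complex.ofReal_mul, Complex.ofReal_cpow hu.1.le, Complex.ofReal_cpow (by linarith [hu.2])]
    push_cast
    rfl
  rw [hbeta, ← himg, hsub, intervalIntegral.integral_of_le pi_pos.le,
    integral_Ioc_eq_integral_Ioo, ← integral_const_mul]
  refine setIntegral_congr_fun measurableSet_Ioo fun t ht => ?_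
  have hs : 0 < sin t := sin_pos_of_mem_Ioo ht
  have hc1 := neg_one_le_cos t
  have hc2 := cos_le_one t
  rw [abs_of_pos (by positivity), smul_eq_mul, ← mul_rpow (by linarith) (by linarith)]
  have e1 : (1 - cos t) / 2 * (1 - (1 - cos t) / 2) = (sin t / 2) ^ (2 : ℝ) := by
    rw [rpow_two]
    nlinarith [sin_sq_add_cos_sq t]
  have e2 : ∀ y : ℝ, sin t / 2 * (sin t / 2) ^ y = (sin t / 2) ^ (1 + y) := fun y => by
    rw [rpow_add (by positivity), rpow_one]
  rw [e1, ← rpow_mul (by positivity)]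
  have e3 : 1 + 2 * ((α + 1) / 2 - 1) = α := by ring
  rw [e2, e3, ← mul_rpow (by norm_num) (by positivity)]
  congr 1
  ring

/-- The case `n = 0` of `symbolIntegral_eq`: the beta function produced by `integral_sin_rpow` is
rewritten by the duplication formula. -/
lemma integral_symbol_zero {α : ℝ} (hα : α ∈ Ioo (0 : ℝ) 2) :
    ∫ x in (0 : ℝ)..(2 * π), |2 * sin (x / 2)| ^ α = 2 * π * stencil α 0 := by
  have h1 : ∫ x in (0 : ℝ)..(2 * π), |2 * sin (x / 2)| ^ α
      = ∫ x in (0 : ℝ)..(2 * π), 2 ^ α * sin (x / 2) ^ α := by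
    refine intervalIntegral.integral_congr fun x hx => ?_
    rw [uIcc_of_le (by positivity)] at hx
    have hs : 0 ≤ sin (x / 2) :=
      sin_nonneg_of_nonneg_of_le_pi (by linarith [hx.1]) (by linarith [hx.2])
    rw [abs_of_nonneg (by positivity), mul_rpow (by norm_num) hs]
  have ha : 0 < (α + 1) / 2 := by linarith [hα.1]
  have hG : 0 < Gamma (α / 2 + 1) := Gamma_pos_of_pos (by linarith [hα.1])
  have hG1 : 0 < Gamma (α + 1) := Gamma_pos_of_pos (by linarith [hα.1])
  have hdup := Real.Gamma_mul_Gamma_add_half ((α + 1) / 2)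
  rw [show (α + 1) / 2 + 1 / 2 = α / 2 + 1 by ring, show 2 * ((α + 1) / 2) = α + 1 by ring,
    show 1 - (α + 1) = -α by ring, rpow_neg (by norm_num)] at hdup
  have hp : (0 : ℝ) < 2 ^ α := by positivity
  have hdup' : Gamma ((α + 1) / 2) = Gamma (α + 1) * (2 ^ α)⁻¹ * √π / Gamma (α / 2 + 1) := by
    rw [eq_div_iff hG.ne', hdup]
  have hpi : √π ^ 2 = π := sq_sqrt pi_pos.le
  rw [h1, intervalIntegral.integral_comp_div (fun t => 2 ^ α * sin t ^ α) (by norm_num), zero_div,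
    mul_div_cancel_left₀ _ (by norm_num), intervalIntegral.integral_const_mul,
    integral_sin_rpow hα, ProbabilityTheory.beta, hdup', stencil, rbinom]
  rw [show (α + 1) / 2 + (α + 1) / 2 = α + 1 by ring]
  simp only [Int.cast_zero, add_zero, zpow_zero, one_mul, smul_eq_mul]
  rw [show α - α / 2 + 1 = α / 2 + 1 by ring]
  field_simp
  rw [hpi]

/-! ### Fourier coefficients of the symbol -/

/-- The integral defining `2π` times the `n`-th Fourier coefficient of the symbol. -/
noncomputable def symbolIntegral (α : ℝ) (n : ℤ) : ℂ :=
  ∫ x in (0 : ℝ)..(2 * π), ((|2 * sin (x / 2)| ^ α : ℝ) : ℂ) * Complex.exp (-(Complex.I * n * x))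

lemma continuous_symbol {α : ℝ} (hα : α ∈ Ioo (0 : ℝ) 2) :
    Continuous fun x : ℝ => ((|2 * sin (x / 2)| ^ α : ℝ) : ℂ) := by
  refine Complex.continuous_ofReal.comp (Continuous.rpow_const (by fun_prop) fun _ => ?_)
  exact Or.inr hα.1.le

/-- Integrating the derivative of `(2 sin (x/2))^(α+1) e^{-i(n+1/2)x}`, which vanishes at both
endpoints, yields the recurrence satisfied by the stencil. -/
lemma symbolIntegral_succ {α : ℝ} (hα : α ∈ Ioo (0 : ℝ) 2) (n : ℤ) :
    (α / 2 + n + 1 : ℂ) * symbolIntegral α (n + 1) = (n - α / 2) * symbolIntegral α n := by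
  set F : ℝ → ℂ := fun x => (((2 * sin (x / 2)) ^ (α + 1) : ℝ) : ℂ)
    * Complex.exp (-(Complex.I * (n + 1 / 2) * x)) with hF
  set F' : ℝ → ℂ := fun x => (α / 2 + n + 1 : ℂ) * (((|2 * sin (x / 2)| ^ α : ℝ) : ℂ)
      * Complex.exp (-(Complex.I * (n + 1 : ℤ) * x)))
    - (n - α / 2) * (((|2 * sin (x / 2)| ^ α : ℝ) : ℂ) * Complex.exp (-(Complex.I * n * x)))
    with hF'
  have hc := continuous_symbol hα
  have hi : ∀ m : ℤ, IntervalIntegrable (fun x : ℝ => ((|2 * sin (x / 2)| ^ α : ℝ) : ℂ)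
      * Complex.exp (-(Complex.I * m * x))) volume 0 (2 * π) := fun m =>
    (hc.mul (by fun_prop)).intervalIntegrable _ _
  have hd : ∀ x ∈ uIcc 0 (2 * π), HasDerivAt F (F' x) x := by
    intro x hx
    rw [uIcc_of_le (by positivity)] at hx
    have hs : 0 ≤ sin (x / 2) :=
      sin_nonneg_of_nonneg_of_le_pi (by linarith [hx.1]) (by linarith [hx.2])
    have d0 : HasDerivAt (fun x : ℝ => 2 * sin (x / 2)) (cos (x / 2)) x := by
      have := (((hasDerivAt_id x).div_const 2).sin).const_mul 2
      refine this.congr_deriv ?_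
      dsimp only [id]
      ring
    -- The exponent `α + 1` exceeds `1`, so this power is differentiable at the zeros of the sine too.
    have d1 := (d0.rpow_const (p := α + 1) (Or.inr (by linarith [hα.1]))).ofReal_comp
    have d2 : HasDerivAt (fun x : ℝ => Complex.exp (-(Complex.I * (n + 1 / 2) * x)))
        (Complex.exp (-(Complex.I * (n + 1 / 2) * x)) * -(Complex.I * (n + 1 / 2))) x := by
      have : HasDerivAt (fun x : ℝ => (x : ℂ)) 1 x := Complex.ofRealCLM.hasDerivAt
      simpa using ((this.const_mul (Complex.I * (n + 1 / 2))).neg).cexp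
    have d3 := d1.mul d2
    refine d3.congr_deriv ?_
    have ea : (2 * sin (x / 2)) ^ (α + 1) = (2 * sin (x / 2)) ^ α * (2 * sin (x / 2)) :=
      rpow_add_one' (by positivity) (by linarith [hα.1])
    -- Everything is expressed through `e^{±ix/2}` and `e^{-i(n+1/2)x}`.
    set E := Complex.exp (Complex.I * (x / 2)) with hE
    set E' := Complex.exp (-(Complex.I * (x / 2))) with hE'
    set H := Complex.exp (-(Complex.I * (n + 1 / 2) * x)) with hH
    have x1 : Complex.exp (-(Complex.I * (n + 1 : ℤ) * x)) = H * E' := by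
      rw [hH, hE', ← Complex.exp_add]; congr 1; push_cast; ring
    have x2 : Complex.exp (-(Complex.I * n * x)) = H * E := by
      rw [hH, hE, ← Complex.exp_add]; congr 1; ring
    have es : (sin (x / 2) : ℂ) = (E' - E) * Complex.I / 2 := by
      push_cast
      rw [Complex.sin, hE, hE']; ring_nf
    have ec : (cos (x / 2) : ℂ) = (E + E') / 2 := by
      push_cast
      rw [Complex.cos, hE, hE']; ring_nf
    simp only [hF']
    rw [x1, x2, abs_of_nonneg (by positivity), add_sub_cancel_right, ea]
    simp only [Complex.ofReal_mul]
    rw [es, ec]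
    push_cast
    linear_combination (-(((2 * sin (x / 2)) ^ α : ℝ) : ℂ) * (E' - E) * H * (n + 1 / 2))
      * Complex.I_sq
  have hint : IntervalIntegrable F' volume 0 (2 * π) :=
    ((hi (n + 1)).const_mul _).sub ((hi n).const_mul _)
  have hv := intervalIntegral.integral_eq_sub_of_hasDerivAt hd hint
  have hα1 : α + 1 ≠ 0 := by linarith [hα.1]
  have z1 : F (2 * π) = 0 := by
    simp [hF, zero_rpow hα1]
  have z0 : F 0 = 0 := by
    simp [hF, zero_rpow hα1]
  rw [z1, z0, sub_zero, hF', intervalIntegral.integral_sub ((hi (n + 1)).const_mul _)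
    ((hi n).const_mul _), intervalIntegral.integral_const_mul,
    intervalIntegral.integral_const_mul] at hv
  exact sub_eq_zero.1 hv

/-- Both sides satisfy the same first-order recurrence, whose coefficients never vanish because
`α/2` is not an integer, and they agree at `n = 0`. -/
lemma symbolIntegral_eq {α : ℝ} (hα : α ∈ Ioo (0 : ℝ) 2) (n : ℤ) :
    symbolIntegral α n = 2 * π * stencil α n := by
  have hne : ∀ m : ℤ, (α / 2 + m : ℂ) ≠ 0 := fun m => by
    exact_mod_cast half_add_int_ne_zero hα m
  have hs : ∀ m : ℤ, (α / 2 + m + 1 : ℂ) * stencil α (m + 1) = (m - α / 2) * stencil α m :=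
    fun m => by exact_mod_cast congrArg (fun r : ℝ => (r : ℂ)) (stencil_succ hα m)
  induction n using Int.induction_on with
  | zero =>
    have := congrArg (fun r : ℝ => (r : ℂ)) (integral_symbol_zero hα)
    rw [← intervalIntegral.integral_ofReal] at this
    simpa [symbolIntegral] using this
  | succ i ih =>
    have h1 := symbolIntegral_succ hα i
    have h2 := hs i
    have h3 := hne (i + 1)
    push_cast at h1 h2 h3
    rw [← add_assoc] at h3
    refine mul_left_cancel₀ h3 ?_
    rw [h1, ih]
    linear_combination (-2 * π : ℂ) * h2
  | pred i ih =>
    have h1 := symbolIntegral_succ hα (-i - 1)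
    have h2 := hs (-i - 1)
    have h3 := hne (i + 1)
    rw [sub_add_cancel] at h1 h2
    push_cast at h1 h2 h3
    refine mul_left_cancel₀ h3 ?_
    rw [ih] at h1
    linear_combination h1 - (2 * π : ℂ) * h2

/-! ### Pointwise convergence of the Fourier series -/

theorem riesz_stencil_symbol (α : ℝ) (hα : α ∈ Set.Ioo (0 : ℝ) 2) (x : ℝ) :
    Summable (fun n : ℤ =>
      ‖(((-1 : ℝ) ^ n * rbinom α (α / 2 + n) : ℝ) : ℂ) * Complex.exp (Complex.I * n * x)‖) ∧
    ∑' n : ℤ, (((-1 : ℝ) ^ n * rbinom α (α / 2 + n) : ℝ) : ℂ) * Complex.exp (Complex.I * n * x)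
      = ((|2 * Real.sin (x / 2)| ^ α : ℝ) : ℂ) := by
  have hsum := summable_stencil hα
  constructor
  · refine hsum.congr fun n => ?_
    have : Complex.I * n * x = ((n * x : ℝ) : ℂ) * Complex.I := by push_cast; ring
    rw [norm_mul, this, Complex.norm_exp_ofReal_mul_I, mul_one, Complex.norm_real,
      Real.norm_eq_abs, stencil]
  · have : Fact (0 < 2 * π) := ⟨by positivity⟩
    have hper : Function.Periodic (fun x : ℝ => ((|2 * sin (x / 2)| ^ α : ℝ) : ℂ)) (2 * π) := by
      intro y
      dsimp only
      rw [show (y + 2 * π) / 2 = y / 2 + π by ring, sin_add_pi, mul_neg, abs_neg]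
    let f : C(AddCircle (2 * π), ℂ) := ⟨hper.lift, continuous_coinduced_dom.2 (continuous_symbol hα)⟩
    have hcoef : ∀ n : ℤ, fourierCoeff f n = stencil α n := by
      intro n
      have hpi : (π : ℂ) ≠ 0 := by exact_mod_cast pi_ne_zero
      have : ∫ y in (0 : ℝ)..0 + 2 * π, fourier (-n) (y : AddCircle (2 * π)) • f y
          = symbolIntegral α n := by
        rw [zero_add, symbolIntegral]
        refine intervalIntegral.integral_congr fun y _ => ?_
        rw [fourier_coe_apply, smul_eq_mul, mul_comm]
        congr 2
        push_cast
        field_simp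
      rw [fourierCoeff_eq_intervalIntegral _ _ 0, this, symbolIntegral_eq hα, Complex.real_smul]
      push_cast
      field_simp
    have hs : Summable (fourierCoeff f) := by
      refine Summable.of_norm (hsum.congr fun n => ?_)
      rw [hcoef, Complex.norm_real, Real.norm_eq_abs]
    have hfs := has_pointwise_sum_fourier_series_of_summable hs (x : AddCircle (2 * π))
    rw [← show f (x : AddCircle (2 * π)) = ((|2 * Real.sin (x / 2)| ^ α : ℝ) : ℂ) from rfl,
      ← hfs.tsum_eq]
    refine tsum_congr fun n => ?_
    have hpi : (π : ℂ) ≠ 0 := by exact_mod_cast pi_ne_zero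
    rw [hcoef, fourier_coe_apply, smul_eq_mul, stencil]
    congr 2
    push_cast
    field_simp
end
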